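/- (Non-metrisability of Painlevé I) Let A₀(x,y) = 6y² + x and A₁ = A₂ = A₃ = 0. Then every smooth solution (ψ₁,ψ₂,ψ₃) of the Liouville linear system on any connected open set U ⊆ ℝ² satisfies ψ₂ ≡ 0 and ψ₃ ≡ 0 on U; in particular ψ₁ψ₃ − ψ₂² vanishes identically, so there is no solution of the Liouville system that is nondegenerate at any point. -/

import Mathlib

/-!
For `y'' = A(x, y)` the Liouville system reads `ψ₁ₓ = -2Aψ₂`, `ψ₃_y = 0`, `ψ₁_y + 2ψ₂ₓ = -2Aψ₃`,
`ψ₃ₓ + 2ψ₂_y = 0`. Equality of the mixed derivatives of `ψ₁` eliminates `ψ₁`: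
`2ψ₂ₓₓ + 2Aₓψ₃ + 3Aψ₃ₓ = 2A_yψ₂`.
Since `ψ₃_y = 0` and `ψ₂_yy = -½ψ₃ₓ_y = 0`, two differentiations in `y` remove all
second and higher derivatives of `ψ₂` and `ψ₃`:
`2Aₓ_yyψ₃ + 5A_yyψ₃ₓ = 2A_yyyψ₂`.
If `Aₓ_y = A_yyy = 0` while `A_yy` and `Aₓ` have no zeros, this forces `ψ₃ₓ = 0`; going back up,
the first `y`-derivative of the relation gives `ψ₂ = 0` and the relation itself gives `ψ₃ = 0`.
-/

noncomputable section

open Matrix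

/-- Partial derivative in the first (x) variable. -/
def pdx (f : ℝ × ℝ → ℝ) : ℝ × ℝ → ℝ :=
  fun p => deriv (fun t => f (t, p.2)) p.1

/-- Partial derivative in the second (y) variable. -/
def pdy (f : ℝ × ℝ → ℝ) : ℝ × ℝ → ℝ :=
  fun p => deriv (fun t => f (p.1, t)) p.2

/-- `pd 0 = ∂ₓ`, `pd 1 = ∂_y`. -/
def pd : Fin 2 → (ℝ × ℝ → ℝ) → (ℝ × ℝ → ℝ) := ![pdx, pdy]

/-- The Liouville linear system associated to `(A0, A1, A2, A3)`, holding on `U`. -/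
def LiouvilleSystem (U : Set (ℝ × ℝ)) (A0 A1 A2 A3 ψ1 ψ2 ψ3 : ℝ × ℝ → ℝ) : Prop :=
  ∀ p ∈ U,
    pdx ψ1 p = (2/3) * A1 p * ψ1 p - 2 * A0 p * ψ2 p ∧
    pdy ψ3 p = 2 * A3 p * ψ2 p - (2/3) * A2 p * ψ3 p ∧
    pdy ψ1 p + 2 * pdx ψ2 p
      = (4/3) * A2 p * ψ1 p - (2/3) * A1 p * ψ2 p - 2 * A0 p * ψ3 p ∧
    pdx ψ3 p + 2 * pdy ψ2 p
      = 2 * A3 p * ψ1 p - (4/3) * A1 p * ψ3 p + (2/3) * A2 p * ψ2 p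

/-- `(A0, A1, A2, A3)` is metrisable near `p` (within `U`). -/
def MetrisableNear (U : Set (ℝ × ℝ)) (A0 A1 A2 A3 : ℝ × ℝ → ℝ) (p : ℝ × ℝ) : Prop :=
  ∃ V : Set (ℝ × ℝ), IsOpen V ∧ p ∈ V ∧ V ⊆ U ∧
    ∃ E F G : ℝ × ℝ → ℝ,
      ContDiffOn ℝ (⊤ : ℕ∞) E V ∧ ContDiffOn ℝ (⊤ : ℕ∞) F V ∧ ContDiffOn ℝ (⊤ : ℕ∞) G V ∧
      (∀ q ∈ V, E q * G q - (F q) ^ 2 ≠ 0) ∧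
      (∀ q ∈ V,
        A0 q = (E q * pdy E q - 2 * E q * pdx F q + F q * pdx E q)
                 / (2 * (E q * G q - (F q) ^ 2)) ∧
        A1 q = (3 * F q * pdy E q + G q * pdx E q - 2 * F q * pdx F q - 2 * E q * pdx G q)
                 / (2 * (E q * G q - (F q) ^ 2)) ∧
        A2 q = (2 * F q * pdy F q + 2 * G q * pdy E q - 3 * F q * pdx G q - E q * pdy G q)
                 / (2 * (E q * G q - (F q) ^ 2)) ∧
        A3 q = (2 * G q * pdy F q - G q * pdx G q - F q * pdy G q)
                 / (2 * (E q * G q - (F q) ^ 2)))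

end

section PartialDerivatives

variable {U : Set (ℝ × ℝ)} {f g : ℝ × ℝ → ℝ} {p : ℝ × ℝ} {m n : WithTop ℕ∞}

lemma hasDerivAt_pdx (hU : IsOpen U) (hf : DifferentiableOn ℝ f U) (hp : p ∈ U) :
    HasDerivAt (fun t => f (t, p.2)) (pdx f p) p.1 :=
  (DifferentiableAt.comp p.1 (g := f) (f := fun t => (t, p.2))
    (hf.differentiableAt (hU.mem_nhds hp)) (by fun_prop)).hasDerivAt

lemma hasDerivAt_pdy (hU : IsOpen U) (hf : DifferentiableOn ℝ f U) (hp : p ∈ U) :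
    HasDerivAt (fun t => f (p.1, t)) (pdy f p) p.2 :=
  (DifferentiableAt.comp p.2 (g := f) (f := fun t => (p.1, t))
    (hf.differentiableAt (hU.mem_nhds hp)) (by fun_prop)).hasDerivAt

lemma pdx_eq_fderiv (hf : DifferentiableAt ℝ f p) : pdx f p = fderiv ℝ f p (1, 0) :=
  (hf.hasFDerivAt.comp_hasDerivAt p.1
    ((hasDerivAt_id p.1).prodMk (hasDerivAt_const p.1 p.2))).deriv

lemma pdy_eq_fderiv (hf : DifferentiableAt ℝ f p) : pdy f p = fderiv ℝ f p (0, 1) :=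
  (hf.hasFDerivAt.comp_hasDerivAt p.2
    ((hasDerivAt_const p.2 p.1).prodMk (hasDerivAt_id p.2))).deriv

lemma contDiffOn_pdx (hU : IsOpen U) (hf : ContDiffOn ℝ n f U) (hmn : m + 1 ≤ n) :
    ContDiffOn ℝ m (pdx f) U :=
  ((hf.fderiv_of_isOpen hU hmn).clm_apply contDiffOn_const).congr fun _ hq =>
    pdx_eq_fderiv ((hf.of_le (le_add_self.trans hmn)).differentiableOn_one.differentiableAt
      (hU.mem_nhds hq))

lemma contDiffOn_pdy (hU : IsOpen U) (hf : ContDiffOn ℝ n f U) (hmn : m + 1 ≤ n) :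
    ContDiffOn ℝ m (pdy f) U :=
  ((hf.fderiv_of_isOpen hU hmn).clm_apply contDiffOn_const).congr fun _ hq =>
    pdy_eq_fderiv ((hf.of_le (le_add_self.trans hmn)).differentiableOn_one.differentiableAt
      (hU.mem_nhds hq))

lemma differentiableOn_pdx (hU : IsOpen U) (hf : ContDiffOn ℝ n f U) (hn : 2 ≤ n) :
    DifferentiableOn ℝ (pdx f) U :=
  (contDiffOn_pdx hU hf (by rwa [one_add_one_eq_two])).differentiableOn_one

lemma differentiableOn_pdy (hU : IsOpen U) (hf : ContDiffOn ℝ n f U) (hn : 2 ≤ n) :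
    DifferentiableOn ℝ (pdy f) U :=
  (contDiffOn_pdy hU hf (by rwa [one_add_one_eq_two])).differentiableOn_one

lemma pdx_congr (hU : IsOpen U) (h : ∀ q ∈ U, f q = g q) (hp : p ∈ U) : pdx f p = pdx g p := by
  have hslice : ContinuousAt (fun t : ℝ => (t, p.2)) p.1 := by fun_prop
  have hfg : (fun t => f (t, p.2)) =ᶠ[nhds p.1] fun t => g (t, p.2) := by
    filter_upwards [hslice.preimage_mem_nhds (hU.mem_nhds hp)] with t ht using h _ ht
  exact hfg.deriv_eq

lemma pdy_congr (hU : IsOpen U) (h : ∀ q ∈ U, f q = g q) (hp : p ∈ U) : pdy f p = pdy g p := by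
  have hslice : ContinuousAt (fun t : ℝ => (p.1, t)) p.2 := by fun_prop
  have hfg : (fun t => f (p.1, t)) =ᶠ[nhds p.2] fun t => g (p.1, t) := by
    filter_upwards [hslice.preimage_mem_nhds (hU.mem_nhds hp)] with t ht using h _ ht
  exact hfg.deriv_eq

lemma pdx_const (c : ℝ) (p : ℝ × ℝ) : pdx (fun _ => c) p = 0 :=
  deriv_const _ _

lemma pdy_const (c : ℝ) (p : ℝ × ℝ) : pdy (fun _ => c) p = 0 :=
  deriv_const _ _

lemma pdx_const_mul (c : ℝ) (f : ℝ × ℝ → ℝ) (p : ℝ × ℝ) :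
    pdx (fun q => c * f q) p = c * pdx f p :=
  deriv_const_mul_field c

lemma pdx_eq_zero (hU : IsOpen U) (h : ∀ q ∈ U, f q = 0) (hp : p ∈ U) : pdx f p = 0 :=
  (pdx_congr hU h hp).trans (pdx_const 0 p)

lemma pdy_eq_zero (hU : IsOpen U) (h : ∀ q ∈ U, f q = 0) (hp : p ∈ U) : pdy f p = 0 :=
  (pdy_congr hU h hp).trans (pdy_const 0 p)

lemma pdy_pdx_comm (hf : ContDiffAt ℝ 2 f p) : pdy (pdx f) p = pdx (pdy f) p := by
  have hdiff : ∀ᶠ q in nhds p, DifferentiableAt ℝ f q :=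
    (hf.eventually (by simp)).mono fun q hq => hq.differentiableAt (by simp)
  have hfd : DifferentiableAt ℝ (fderiv ℝ f) p :=
    (hf.fderiv_right (m := 1) (by norm_num)).differentiableAt (by simp)
  have hx : pdx f =ᶠ[nhds p] fun q => fderiv ℝ f q (1, 0) := hdiff.mono fun _ => pdx_eq_fderiv
  have hy : pdy f =ᶠ[nhds p] fun q => fderiv ℝ f q (0, 1) := hdiff.mono fun _ => pdy_eq_fderiv
  have hfd_apply (v : ℝ × ℝ) : DifferentiableAt ℝ (fun q => fderiv ℝ f q v) p :=
    hfd.clm_apply (differentiableAt_const v)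
  have hsnd (v w : ℝ × ℝ) :
      fderiv ℝ (fun q => fderiv ℝ f q v) p w = fderiv ℝ (fderiv ℝ f) p w v := by
    simp [fderiv_clm_apply hfd (differentiableAt_const v)]
  rw [pdy_eq_fderiv ((hfd_apply _).congr_of_eventuallyEq hx),
    pdx_eq_fderiv ((hfd_apply _).congr_of_eventuallyEq hy), hx.fderiv_eq, hy.fderiv_eq, hsnd, hsnd]
  exact (hf.isSymmSndFDerivAt (by simp)).eq _ _

lemma pdy_pdx_eq_pdx (hU : IsOpen U) (hf : ContDiffOn ℝ 2 f U) (h : ∀ q ∈ U, pdy f q = g q)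
    (hp : p ∈ U) : pdy (pdx f) p = pdx g p :=
  (pdy_pdx_comm (hf.contDiffAt (hU.mem_nhds hp))).trans (pdx_congr hU h hp)

end PartialDerivatives

/-- The Liouville system of the projective structure of the equation `y'' = A(x, y)`, whose
remaining coefficients `A₁`, `A₂`, `A₃` vanish. -/
def NewtonLiouvilleSystem (U : Set (ℝ × ℝ)) (A ψ1 ψ2 ψ3 : ℝ × ℝ → ℝ) : Prop :=
  LiouvilleSystem U A (fun _ => 0) (fun _ => 0) (fun _ => 0) ψ1 ψ2 ψ3

namespace NewtonLiouvilleSystem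

variable {U : Set (ℝ × ℝ)} {A ψ1 ψ2 ψ3 : ℝ × ℝ → ℝ} {p : ℝ × ℝ}

lemma pdx_psi1 (h : NewtonLiouvilleSystem U A ψ1 ψ2 ψ3) (hp : p ∈ U) :
    pdx ψ1 p = -2 * (A p * ψ2 p) := by
  linarith [(h p hp).1]

lemma pdy_psi1 (h : NewtonLiouvilleSystem U A ψ1 ψ2 ψ3) (hp : p ∈ U) :
    pdy ψ1 p = -2 * (A p * ψ3 p) - 2 * pdx ψ2 p := by
  linarith [(h p hp).2.2.1]

lemma pdy_psi2 (h : NewtonLiouvilleSystem U A ψ1 ψ2 ψ3) (hp : p ∈ U) :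
    pdy ψ2 p = -(1 / 2) * pdx ψ3 p := by
  linarith [(h p hp).2.2.2]

lemma pdy_psi3 (h : NewtonLiouvilleSystem U A ψ1 ψ2 ψ3) (hp : p ∈ U) : pdy ψ3 p = 0 := by
  linarith [(h p hp).2.1]

lemma pdy_pdx_psi3 (h : NewtonLiouvilleSystem U A ψ1 ψ2 ψ3) (hU : IsOpen U)
    (hψ3 : ContDiffOn ℝ 2 ψ3 U) (hp : p ∈ U) : pdy (pdx ψ3) p = 0 :=
  (pdy_pdx_eq_pdx hU hψ3 (fun _ => h.pdy_psi3) hp).trans (pdx_const 0 p)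

lemma pdy_pdx_pdx_pdx_psi3 (h : NewtonLiouvilleSystem U A ψ1 ψ2 ψ3) (hU : IsOpen U)
    (hψ3 : ContDiffOn ℝ 4 ψ3 U) (hp : p ∈ U) : pdy (pdx (pdx (pdx ψ3))) p = 0 := by
  have hx : ContDiffOn ℝ 3 (pdx ψ3) U := contDiffOn_pdx hU hψ3 (by norm_num)
  have hxx : ContDiffOn ℝ 2 (pdx (pdx ψ3)) U := contDiffOn_pdx hU hx (by norm_num)
  have hxy : ∀ q ∈ U, pdy (pdx ψ3) q = 0 := fun q =>
    h.pdy_pdx_psi3 hU (hψ3.of_le (by norm_num))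
  have hxxy : ∀ q ∈ U, pdy (pdx (pdx ψ3)) q = 0 := fun q hq =>
    (pdy_pdx_eq_pdx hU (hx.of_le (by norm_num)) hxy hq).trans (pdx_const 0 q)
  exact (pdy_pdx_eq_pdx hU hxx hxxy hp).trans (pdx_const 0 p)

lemma pdy_pdx_pdx_psi2 (h : NewtonLiouvilleSystem U A ψ1 ψ2 ψ3) (hU : IsOpen U)
    (hψ2 : ContDiffOn ℝ 3 ψ2 U) (hp : p ∈ U) :
    pdy (pdx (pdx ψ2)) p = -(1 / 2) * pdx (pdx (pdx ψ3)) p := by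
  have hxy : ∀ q ∈ U, pdy (pdx ψ2) q = -(1 / 2) * pdx (pdx ψ3) q := fun q hq =>
    (pdy_pdx_eq_pdx hU (hψ2.of_le (by norm_num)) (fun _ => h.pdy_psi2) hq).trans
      (pdx_const_mul _ _ q)
  exact (pdy_pdx_eq_pdx hU (contDiffOn_pdx hU hψ2 (by norm_num)) hxy hp).trans
    (pdx_const_mul _ _ p)

lemma integrability_condition (h : NewtonLiouvilleSystem U A ψ1 ψ2 ψ3) (hU : IsOpen U)
    (hA : ContDiffOn ℝ 1 A U) (hψ1 : ContDiffOn ℝ 2 ψ1 U) (hψ2 : ContDiffOn ℝ 2 ψ2 U)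
    (hψ3 : ContDiffOn ℝ 1 ψ3 U) (hp : p ∈ U) :
    2 * pdx (pdx ψ2) p + 2 * (pdx A p * ψ3 p) + 3 * (A p * pdx ψ3 p) = 2 * (pdy A p * ψ2 p) := by
  have dA := hA.differentiableOn_one
  have dψ2 := hψ2.differentiableOn two_ne_zero
  have dψ3 := hψ3.differentiableOn_one
  have dψ2x := differentiableOn_pdx hU hψ2 le_rfl
  have hxy : pdy (pdx ψ1) p = -2 * (pdy A p * ψ2 p + A p * pdy ψ2 p) :=
    (pdy_congr hU (fun _ => h.pdx_psi1) hp).trans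
      (((hasDerivAt_pdy hU dA hp).mul (hasDerivAt_pdy hU dψ2 hp)).const_mul (-2)).deriv
  have hyx : pdx (pdy ψ1) p = -2 * (pdx A p * ψ3 p + A p * pdx ψ3 p) - 2 * pdx (pdx ψ2) p :=
    (pdx_congr hU (fun _ => h.pdy_psi1) hp).trans
      ((((hasDerivAt_pdx hU dA hp).mul (hasDerivAt_pdx hU dψ3 hp)).const_mul (-2)).sub
        ((hasDerivAt_pdx hU dψ2x hp).const_mul 2)).deriv
  have hcomm := pdy_pdx_comm (hψ1.contDiffAt (hU.mem_nhds hp))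
  rw [hxy, hyx, h.pdy_psi2 hp] at hcomm
  linear_combination hcomm

lemma pdy_integrability_condition (h : NewtonLiouvilleSystem U A ψ1 ψ2 ψ3) (hU : IsOpen U)
    (hA : ContDiffOn ℝ 2 A U) (hψ1 : ContDiffOn ℝ 2 ψ1 U) (hψ2 : ContDiffOn ℝ 3 ψ2 U)
    (hψ3 : ContDiffOn ℝ 2 ψ3 U) (hp : p ∈ U) :
    2 * (pdy (pdx A) p * ψ3 p) + 4 * (pdy A p * pdx ψ3 p) - pdx (pdx (pdx ψ3)) p
      = 2 * (pdy (pdy A) p * ψ2 p) := by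
  have hψ2x : ContDiffOn ℝ 2 (pdx ψ2) U := contDiffOn_pdx hU hψ2 (by norm_num)
  have hAy := hasDerivAt_pdy hU (hA.differentiableOn two_ne_zero) hp
  have hAxy := hasDerivAt_pdy hU (differentiableOn_pdx hU hA le_rfl) hp
  have hAyy := hasDerivAt_pdy hU (differentiableOn_pdy hU hA le_rfl) hp
  have hψ2y := hasDerivAt_pdy hU (hψ2.differentiableOn three_ne_zero) hp
  have hψ2xxy := hasDerivAt_pdy hU (differentiableOn_pdx hU hψ2x le_rfl) hp
  have hψ3y := hasDerivAt_pdy hU (hψ3.differentiableOn two_ne_zero) hp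
  have hψ3xy := hasDerivAt_pdy hU (differentiableOn_pdx hU hψ3 le_rfl) hp
  have hlhs := (((hψ2xxy.const_mul 2).add ((hAxy.mul hψ3y).const_mul 2)).add
    ((hAy.mul hψ3xy).const_mul 3)).deriv
  have hrhs := ((hAyy.mul hψ2y).const_mul 2).deriv
  have hcond := pdy_congr hU (fun q => h.integrability_condition hU (hA.of_le one_le_two) hψ1
    (hψ2.of_le (by norm_num)) (hψ3.of_le one_le_two)) hp
  have hderiv := hlhs.symm.trans (hcond.trans hrhs)
  rw [h.pdy_pdx_pdx_psi2 hU hψ2 hp, h.pdy_psi3 hp, h.pdy_pdx_psi3 hU hψ3 hp,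
    h.pdy_psi2 hp] at hderiv
  linear_combination hderiv

lemma pdy_pdy_integrability_condition (h : NewtonLiouvilleSystem U A ψ1 ψ2 ψ3) (hU : IsOpen U)
    (hA : ContDiffOn ℝ 3 A U) (hψ1 : ContDiffOn ℝ 2 ψ1 U) (hψ2 : ContDiffOn ℝ 3 ψ2 U)
    (hψ3 : ContDiffOn ℝ 4 ψ3 U) (hp : p ∈ U) :
    2 * (pdy (pdy (pdx A)) p * ψ3 p) + 5 * (pdy (pdy A) p * pdx ψ3 p)
      = 2 * (pdy (pdy (pdy A)) p * ψ2 p) := by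
  have hAx : ContDiffOn ℝ 2 (pdx A) U := contDiffOn_pdx hU hA (by norm_num)
  have hAy : ContDiffOn ℝ 2 (pdy A) U := contDiffOn_pdy hU hA (by norm_num)
  have hψ3x : ContDiffOn ℝ 3 (pdx ψ3) U := contDiffOn_pdx hU hψ3 (by norm_num)
  have hψ3xx : ContDiffOn ℝ 2 (pdx (pdx ψ3)) U := contDiffOn_pdx hU hψ3x (by norm_num)
  have hAyy := hasDerivAt_pdy hU (hAy.differentiableOn two_ne_zero) hp
  have hAxyy := hasDerivAt_pdy hU (differentiableOn_pdy hU hAx le_rfl) hp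
  have hAyyy := hasDerivAt_pdy hU (differentiableOn_pdy hU hAy le_rfl) hp
  have hψ2y := hasDerivAt_pdy hU (hψ2.differentiableOn three_ne_zero) hp
  have hψ3y := hasDerivAt_pdy hU (hψ3.differentiableOn four_ne_zero) hp
  have hψ3xy := hasDerivAt_pdy hU (hψ3x.differentiableOn three_ne_zero) hp
  have hψ3xxxy := hasDerivAt_pdy hU (differentiableOn_pdx hU hψ3xx le_rfl) hp
  have hlhs := ((((hAxyy.mul hψ3y).const_mul 2).add ((hAyy.mul hψ3xy).const_mul 4)).sub
    hψ3xxxy).deriv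
  have hrhs := ((hAyyy.mul hψ2y).const_mul 2).deriv
  have hcond := pdy_congr hU (fun q => h.pdy_integrability_condition hU (hA.of_le (by norm_num))
    hψ1 hψ2 (hψ3.of_le (by norm_num))) hp
  have hderiv := hlhs.symm.trans (hcond.trans hrhs)
  rw [h.pdy_psi3 hp, h.pdy_pdx_psi3 hU (hψ3.of_le (by norm_num)) hp,
    h.pdy_pdx_pdx_pdx_psi3 hU hψ3 hp, h.pdy_psi2 hp] at hderiv
  linear_combination hderiv

end NewtonLiouvilleSystem

theorem painleveI_not_metrisable_general {U : Set (ℝ × ℝ)} (hU : IsOpen U)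
    {A ψ1 ψ2 ψ3 : ℝ × ℝ → ℝ} (hA : ContDiffOn ℝ 3 A U)
    (hAx : ∀ q ∈ U, pdx A q ≠ 0) (hAxy : ∀ q ∈ U, pdy (pdx A) q = 0)
    (hAyy : ∀ q ∈ U, pdy (pdy A) q ≠ 0) (hAyyy : ∀ q ∈ U, pdy (pdy (pdy A)) q = 0)
    (hψ1 : ContDiffOn ℝ 2 ψ1 U) (hψ2 : ContDiffOn ℝ 3 ψ2 U) (hψ3 : ContDiffOn ℝ 4 ψ3 U)
    (h : NewtonLiouvilleSystem U A ψ1 ψ2 ψ3) :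
    (∀ q ∈ U, ψ2 q = 0 ∧ ψ3 q = 0) ∧ ∀ q ∈ U, ψ1 q * ψ3 q - (ψ2 q) ^ 2 = 0 := by
  have hψ3x : ∀ q ∈ U, pdx ψ3 q = 0 := fun q hq => by
    simpa [hAyyy q hq, pdy_eq_zero hU hAxy hq, hAyy q hq] using
      h.pdy_pdy_integrability_condition hU hA hψ1 hψ2 hψ3 hq
  have hψ3xx : ∀ q ∈ U, pdx (pdx ψ3) q = 0 := fun q => pdx_eq_zero hU hψ3x
  have hψ2_zero : ∀ q ∈ U, ψ2 q = 0 := fun q hq => by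
    simpa [hAxy q hq, hψ3x q hq, pdx_eq_zero hU hψ3xx hq, hAyy q hq] using
      h.pdy_integrability_condition hU (hA.of_le (by norm_num)) hψ1 hψ2
        (hψ3.of_le (by norm_num)) hq
  have hψ2x : ∀ q ∈ U, pdx ψ2 q = 0 := fun q => pdx_eq_zero hU hψ2_zero
  have hψ3_zero : ∀ q ∈ U, ψ3 q = 0 := fun q hq => by
    simpa [pdx_eq_zero hU hψ2x hq, hψ3x q hq, hψ2_zero q hq, hAx q hq] using
      h.integrability_condition hU (hA.of_le (by norm_num)) hψ1 (hψ2.of_le (by norm_num))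
        (hψ3.of_le (by norm_num)) hq
  exact ⟨fun q hq => ⟨hψ2_zero q hq, hψ3_zero q hq⟩, fun q hq => by
    simp [hψ2_zero q hq, hψ3_zero q hq]⟩

/-- The right-hand side of the first Painlevé equation `y'' = 6y² + x`. -/
def painleveI : ℝ × ℝ → ℝ :=
  fun q => 6 * q.2 ^ 2 + q.1

lemma contDiff_painleveI {n : WithTop ℕ∞} : ContDiff ℝ n painleveI := by
  unfold painleveI
  fun_prop

lemma pdx_painleveI : pdx painleveI = fun _ => 1 := by
  ext q
  simp [pdx, painleveI]

lemma pdy_painleveI : pdy painleveI = fun q => 12 * q.2 := by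
  ext q
  simp only [pdy, painleveI, deriv_add_const, deriv_const_mul_field, deriv_pow_field]
  ring

lemma pdy_pdy_painleveI : pdy (pdy painleveI) = fun _ => 12 := by
  ext q
  rw [pdy_painleveI]
  simp [pdy]

/-- **Non-metrisability of Painlevé I.** For `A₀ = 6y² + x`, `A₁ = A₂ = A₃ = 0`, every
smooth solution of the Liouville linear system on a connected open `U` has `ψ₂ ≡ 0` and
`ψ₃ ≡ 0`; in particular `ψ₁ψ₃ − ψ₂²` vanishes identically. -/
theorem painleveI_not_metrisable (U : Set (ℝ × ℝ)) (hU : IsOpen U) (hUconn : IsConnected U)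
    (ψ1 ψ2 ψ3 : ℝ × ℝ → ℝ)
    (hψ1 : ContDiffOn ℝ (⊤ : ℕ∞) ψ1 U) (hψ2 : ContDiffOn ℝ (⊤ : ℕ∞) ψ2 U) (hψ3 : ContDiffOn ℝ (⊤ : ℕ∞) ψ3 U)
    (hsys : LiouvilleSystem U (fun q => 6 * q.2 ^ 2 + q.1) (fun _ => 0) (fun _ => 0)
      (fun _ => 0) ψ1 ψ2 ψ3) :
    (∀ q ∈ U, ψ2 q = 0 ∧ ψ3 q = 0) ∧
    ∀ q ∈ U, ψ1 q * ψ3 q - (ψ2 q) ^ 2 = 0 :=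
  painleveI_not_metrisable_general hU contDiff_painleveI.contDiffOn
    (by simp [pdx_painleveI]) (by simp [pdx_painleveI, pdy_const])
    (by simp [pdy_pdy_painleveI]) (by simp [pdy_pdy_painleveI, pdy_const])
    (hψ1.of_le ENat.LEInfty.out) (hψ2.of_le ENat.LEInfty.out) (hψ3.of_le ENat.LEInfty.out) hsys
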